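/- arXiv:math/0501083 — 2 statements merged into one kernel-verified Lean document; each statement's English description precedes it below -/
import Mathlib

section
/- Let B be a unital complex Banach algebra, (A,E) a B-valued Banach noncommutative probability space, and a ∈ A with E(a) invertible in B. Then there exist an open neighborhood U of 0 in B and a B-valued analytic function H_a on U with H_a(0) = E(a)^{-1} such that Ψ_a(b H_a(b)) = b for all b ∈ U; moreover H_a is unique in the sense that any two analytic functions on neighborhoods of 0 with this property agree on a neighborhood of 0. -/
open scoped Topology
open Filter

noncomputable section

variable (B A : Type*) [NormedRing B] [NormedAlgebra ℂ B] [CompleteSpace B]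
  [NormedRing A] [NormedAlgebra ℂ A] [CompleteSpace A]

/-- A `B`-valued Banach noncommutative probability space structure on `A`. -/
structure NCPS where
  ι : B →ₐ[ℂ] A
  isometry : Isometry ι
  E : A →L[ℂ] B
  E_ι : ∀ b : B, E (ι b) = b
  cond_exp : ∀ (a : A) (b₁ b₂ : B), E (ι b₁ * a * ι b₂) = b₁ * E a * b₂

variable {B A}

/-- `Ψ_a(b) = E((1 - ba)⁻¹) - 1`. -/
def Psi (P : NCPS B A) (a : A) (b : B) : B := P.E (Ring.inverse (1 - P.ι b * a)) - 1

/-!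
Near `0` one has `Ψ(b) = b G(b)` with `G(b) = E(a (1 - ba)⁻¹)` analytic and `G(0) = E(a)`, so
`Ψ(b H(b)) = b` reads `b H(b) G(b H(b)) = b`. An analytic `K` with `b K(b) = 0` near `0` vanishes
at the invertible elements, which form an open set accumulating at `0`, so `K = 0` near `0` by the
identity theorem. Hence the factor `b` cancels, leaving `H(b) G(b H(b)) = 1`. This forces
`H(0) = G(0)⁻¹`, and the implicit function theorem applies to `(b, h) ↦ h G(b h)` at
`(0, G(0)⁻¹)`, whose partial derivative in `h` is right multiplication by the unit `G(0)`.
-/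

section Cancellation

variable {𝕜 R F : Type*} [RCLike 𝕜] [NormedRing R] [NormedAlgebra 𝕜 R] [CompleteSpace R]
  [NormedAddCommGroup F] [NormedSpace 𝕜 F] [CompleteSpace F]

theorem eventuallyEq_zero_of_eventually_isUnit_imp {K : R → F} (hK : AnalyticAt 𝕜 K 0)
    (h : ∀ᶠ b in 𝓝 (0 : R), IsUnit b → K b = 0) : K =ᶠ[𝓝 0] 0 := by
  obtain ⟨r, hr, hball⟩ := Metric.eventually_nhds_iff_ball.1 (hK.eventually_analyticAt.and h)
  have hscalar : Tendsto (fun z : 𝕜 ↦ z • (1 : R)) (𝓝[≠] 0) (𝓝 0) :=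
    Continuous.tendsto' (by fun_prop) 0 0 (zero_smul 𝕜 1) |>.mono_left nhdsWithin_le_nhds
  obtain ⟨z, hz_ball, hz⟩ :=
    ((hscalar.eventually_mem (Metric.ball_mem_nhds 0 hr)).and eventually_mem_nhdsWithin).exists
  have hz_unit : IsUnit (z • (1 : R)) := isUnit_one.smul (Units.mk0 z hz)
  have hK_near_z : K =ᶠ[𝓝 (z • 1)] 0 := by
    filter_upwards [Metric.isOpen_ball.mem_nhds hz_ball, Units.isOpen.mem_nhds hz_unit]
      with b hb hb_unit using (hball b hb).2 hb_unit
  have hpre : IsPreconnected (Metric.ball (0 : R) r) :=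
    letI := NormedSpace.restrictScalars ℝ 𝕜 R
    (convex_ball 0 r).isPreconnected
  have hK_analytic : AnalyticOnNhd 𝕜 K (Metric.ball 0 r) := fun b hb ↦ (hball b hb).1
  exact (hK_analytic.eqOn_zero_of_preconnected_of_eventuallyEq_zero hpre hz_ball
    hK_near_z).eventuallyEq_of_mem (Metric.ball_mem_nhds 0 hr)

theorem eventually_mul_eq_self_iff {f : R → R} (hf : AnalyticAt 𝕜 f 0) :
    (∀ᶠ b in 𝓝 (0 : R), b * f b = b) ↔ ∀ᶠ b in 𝓝 (0 : R), f b = 1 := by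
  refine ⟨fun h ↦ ?_, fun h ↦ h.mono fun b hb ↦ by rw [hb, mul_one]⟩
  have hzero : (fun b ↦ f b - 1) =ᶠ[𝓝 0] 0 :=
    eventuallyEq_zero_of_eventually_isUnit_imp (hf.sub analyticAt_const) <|
      h.mono fun b hb hb_unit ↦ sub_eq_zero.2 <| hb_unit.mul_left_cancel (by rw [hb, mul_one])
  exact hzero.mono fun b hb ↦ sub_eq_zero.1 hb

end Cancellation

section PartialDerivative

variable {𝕜 R : Type*} [NontriviallyNormedField 𝕜] [NormedRing R] [NormedAlgebra 𝕜 R] {G : R → R}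

theorem isInvertible_mul_flip (u : Rˣ) :
    ((ContinuousLinearMap.mul 𝕜 R).flip u).IsInvertible :=
  .of_inverse (g := (ContinuousLinearMap.mul 𝕜 R).flip ↑u⁻¹) (by ext; simp) (by ext; simp)

theorem analyticAt_mul_comp_mul (hG : AnalyticAt 𝕜 G 0) (h : R) :
    AnalyticAt 𝕜 (fun p : R × R ↦ p.2 * G (p.1 * p.2)) (0, h) :=
  analyticAt_snd.mul <| hG.fun_comp_of_eq (analyticAt_fst.mul analyticAt_snd) (zero_mul h)

theorem fderiv_mul_comp_mul_comp_inr (hG : AnalyticAt 𝕜 G 0) (h : R) :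
    fderiv 𝕜 (fun p : R × R ↦ p.2 * G (p.1 * p.2)) (0, h) ∘L .inr 𝕜 R R =
      (ContinuousLinearMap.mul 𝕜 R).flip (G 0) := by
  have hpartial := (analyticAt_mul_comp_mul hG h).differentiableAt.hasFDerivAt.comp h
    (hasFDerivAt_prodMk_right 0 h)
  have hlinear : (fun p : R × R ↦ p.2 * G (p.1 * p.2)) ∘ (fun x ↦ (0, x)) =
      (ContinuousLinearMap.mul 𝕜 R).flip (G 0) := by
    ext x
    simp
  rw [hlinear] at hpartial
  exact hpartial.unique (ContinuousLinearMap.hasFDerivAt _)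

end PartialDerivative

section RightInverse

variable {𝕜 R : Type*} [RCLike 𝕜] [NormedRing R] [NormedAlgebra 𝕜 R] [CompleteSpace R]
  {Ψ G H H₁ H₂ : R → R}

theorem exists_analyticAt_eventually_mul_comp_mul_eq_one_iff (hG : AnalyticAt 𝕜 G 0) {u : Rˣ}
    (hu : G 0 = u) :
    ∃ H : R → R, AnalyticAt 𝕜 H 0 ∧ H 0 = ↑u⁻¹ ∧
      ∀ᶠ p in 𝓝 ((0 : R), (↑u⁻¹ : R)), p.2 * G (p.1 * p.2) = 1 ↔ H p.1 = p.2 := by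
  have hF : ContDiffAt 𝕜 ⊤ (fun p : R × R ↦ p.2 * G (p.1 * p.2)) (0, ↑u⁻¹) :=
    (analyticAt_mul_comp_mul hG _).contDiffAt
  have hinv : (fderiv 𝕜 (fun p : R × R ↦ p.2 * G (p.1 * p.2)) (0, ↑u⁻¹) ∘L
      .inr 𝕜 R R).IsInvertible := by
    rw [fderiv_mul_comp_mul_comp_inr hG, hu]
    exact isInvertible_mul_flip u
  refine ⟨hF.implicitFunction (by simp) hinv,
    (hF.contDiffAt_implicitFunction (by simp) hinv).analyticAt,
    hF.implicitFunction_apply_self (by simp) hinv, ?_⟩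
  simpa only [zero_mul, hu, Units.inv_mul] using
    hF.eventually_apply_eq_iff_implicitFunction (by simp) hinv

theorem exists_analyticAt_eventually_mul_comp_mul_eq_one (hG : AnalyticAt 𝕜 G 0) {u : Rˣ}
    (hu : G 0 = u) :
    ∃ H : R → R, AnalyticAt 𝕜 H 0 ∧ H 0 = ↑u⁻¹ ∧
      ∀ᶠ b in 𝓝 (0 : R), H b * G (b * H b) = 1 := by
  obtain ⟨H, hH, hH0, h_iff⟩ := exists_analyticAt_eventually_mul_comp_mul_eq_one_iff hG hu
  have hgraph : Tendsto (fun b ↦ (b, H b)) (𝓝 0) (𝓝 (0, ↑u⁻¹)) :=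
    hH0 ▸ tendsto_id.prodMk_nhds hH.continuousAt
  exact ⟨H, hH, hH0, (hgraph.eventually h_iff).mono fun b hb ↦ hb.2 rfl⟩

theorem eventuallyEq_of_eventually_mul_comp_mul_eq_one (hG : AnalyticAt 𝕜 G 0)
    (hG0 : IsUnit (G 0)) (hH₁ : ContinuousAt H₁ 0) (hH₂ : ContinuousAt H₂ 0)
    (h₁ : ∀ᶠ b in 𝓝 (0 : R), H₁ b * G (b * H₁ b) = 1)
    (h₂ : ∀ᶠ b in 𝓝 (0 : R), H₂ b * G (b * H₂ b) = 1) : H₁ =ᶠ[𝓝 0] H₂ := by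
  obtain ⟨u, hu⟩ := hG0
  obtain ⟨H, -, -, h_iff⟩ := exists_analyticAt_eventually_mul_comp_mul_eq_one_iff hG hu.symm
  have eq_implicit {H' : R → R} (hH' : ContinuousAt H' 0)
      (h : ∀ᶠ b in 𝓝 (0 : R), H' b * G (b * H' b) = 1) : H =ᶠ[𝓝 0] H' := by
    have hH'0 : H' 0 = ↑u⁻¹ := by
      rw [← Units.mul_eq_one_iff_eq_inv, hu]
      simpa only [zero_mul] using h.self_of_nhds
    have hgraph : Tendsto (fun b ↦ (b, H' b)) (𝓝 0) (𝓝 (0, ↑u⁻¹)) :=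
      hH'0 ▸ tendsto_id.prodMk_nhds hH'
    filter_upwards [h, hgraph.eventually h_iff] with b hb hb_iff using hb_iff.1 hb
  exact (eq_implicit hH₁ h₁).symm.trans (eq_implicit hH₂ h₂)

theorem eventually_comp_mul_eq_self_iff (hΨ : ∀ᶠ b in 𝓝 (0 : R), Ψ b = b * G b)
    (hG : AnalyticAt 𝕜 G 0) (hH : AnalyticAt 𝕜 H 0) :
    (∀ᶠ b in 𝓝 (0 : R), Ψ (b * H b) = b) ↔ ∀ᶠ b in 𝓝 (0 : R), H b * G (b * H b) = 1 := by
  have hbH : AnalyticAt 𝕜 (fun b ↦ b * H b) 0 := analyticAt_id.mul hH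
  have hbH_tendsto : Tendsto (fun b ↦ b * H b) (𝓝 0) (𝓝 0) := by
    simpa only [zero_mul] using hbH.continuousAt.tendsto
  have hΨ_comp : ∀ᶠ b in 𝓝 (0 : R), Ψ (b * H b) = b ↔ b * (H b * G (b * H b)) = b :=
    (hbH_tendsto.eventually hΨ).mono fun b hb ↦ by rw [hb, mul_assoc]
  rw [eventually_congr hΨ_comp]
  exact eventually_mul_eq_self_iff (hH.mul (hG.fun_comp_of_eq hbH (zero_mul _)))

end RightInverse

section MomentTransform

variable {𝕜 R S : Type*} [NontriviallyNormedField 𝕜] [NormedRing R] [NormedAlgebra 𝕜 R]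
  [NormedRing S] [NormedAlgebra 𝕜 S]

/-- The moment transform `b ↦ E((1 - ba)⁻¹) - 1`, where the inclusion `ι` of the scalars and the
conditional expectation `E` are only assumed to be continuous linear maps. -/
def momentTransform (ι : R →L[𝕜] S) (E : S →L[𝕜] R) (a : S) (b : R) : R :=
  E (Ring.inverse (1 - ι b * a)) - 1

/-- The map `b ↦ E(a (1 - ba)⁻¹)`, which is the moment transform with its left factor `b`
removed. -/
def reducedMomentTransform (ι : R →L[𝕜] S) (E : S →L[𝕜] R) (a : S) (b : R) : R :=
  E (a * Ring.inverse (1 - ι b * a))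

variable (ι : R →L[𝕜] S) (E : S →L[𝕜] R) (a : S)

theorem reducedMomentTransform_zero : reducedMomentTransform ι E a 0 = E a := by
  simp [reducedMomentTransform]

variable [CompleteSpace S]

theorem analyticAt_reducedMomentTransform : AnalyticAt 𝕜 (reducedMomentTransform ι E a) 0 := by
  have hmul : AnalyticAt 𝕜 (fun b ↦ ι b * a) 0 := (ι.analyticAt 0).mul analyticAt_const
  have hinverse : AnalyticAt 𝕜 (fun b ↦ Ring.inverse (1 - ι b * a)) 0 :=
    (analyticAt_inverse_one_sub 𝕜 S).fun_comp_of_eq hmul (by simp)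
  exact (E.analyticAt _).fun_comp (analyticAt_const.mul hinverse)

variable {ι E}

theorem eventually_momentTransform_eq_mul (hE : ∀ b x, E (ι b * x) = b * E x) (hE_one : E 1 = 1) :
    ∀ᶠ b in 𝓝 (0 : R), momentTransform ι E a b = b * reducedMomentTransform ι E a b := by
  have htendsto : Tendsto (fun b ↦ 1 - ι b * a) (𝓝 0) (𝓝 1) :=
    Continuous.tendsto' (by fun_prop) 0 1 (by simp)
  filter_upwards [htendsto.eventually_mem (Units.isOpen.mem_nhds isUnit_one)] with b hb
  have hresolvent : ι b * (a * Ring.inverse (1 - ι b * a)) = Ring.inverse (1 - ι b * a) - 1 := by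
    rw [← mul_assoc, eq_sub_iff_add_eq', ← eq_sub_iff_add_eq, ← one_sub_mul,
      Ring.mul_inverse_cancel _ hb]
  rw [momentTransform, reducedMomentTransform, ← hE, hresolvent, map_sub, hE_one]

end MomentTransform

namespace NCPS

variable {R S : Type*} [NormedRing R] [NormedAlgebra ℂ R] [NormedRing S] [NormedAlgebra ℂ S]

theorem E_ι_mul (P : NCPS R S) (b : R) (x : S) : P.E (P.ι b * x) = b * P.E x := by
  simpa only [map_one, mul_one] using P.cond_exp x b 1

theorem E_one (P : NCPS R S) : P.E 1 = 1 := by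
  simpa only [map_one] using P.E_ι 1

end NCPS

theorem stmt_1_general {𝕜 R S : Type*} [RCLike 𝕜] [NormedRing R] [NormedAlgebra 𝕜 R]
    [CompleteSpace R] [NormedRing S] [NormedAlgebra 𝕜 S] [CompleteSpace S]
    {ι : R →L[𝕜] S} {E : S →L[𝕜] R} (hE : ∀ b x, E (ι b * x) = b * E x) (hE_one : E 1 = 1)
    {a : S} (ha : IsUnit (E a)) :
    (∃ U ∈ 𝓝 (0 : R), ∃ H : R → R, (∀ b ∈ U, AnalyticAt 𝕜 H b) ∧
      H 0 = Ring.inverse (E a) ∧ ∀ b ∈ U, momentTransform ι E a (b * H b) = b) ∧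
    ∀ H₁ H₂ : R → R, AnalyticAt 𝕜 H₁ 0 → AnalyticAt 𝕜 H₂ 0 →
      (∀ᶠ b in 𝓝 (0 : R), momentTransform ι E a (b * H₁ b) = b) →
      (∀ᶠ b in 𝓝 (0 : R), momentTransform ι E a (b * H₂ b) = b) →
      H₁ =ᶠ[𝓝 (0 : R)] H₂ := by
  have hG := analyticAt_reducedMomentTransform ι E a
  have hG0 := reducedMomentTransform_zero ι E a
  have h_iff {H : R → R} (hH : AnalyticAt 𝕜 H 0) :=
    eventually_comp_mul_eq_self_iff (eventually_momentTransform_eq_mul a hE hE_one) hG hH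
  constructor
  · obtain ⟨u, hu⟩ := ha
    obtain ⟨H, hH, hH0, h⟩ :=
      exists_analyticAt_eventually_mul_comp_mul_eq_one hG (hG0.trans hu.symm)
    exact ⟨_, hH.eventually_analyticAt.and ((h_iff hH).2 h), H, fun b hb ↦ hb.1,
      by rw [hH0, ← hu, Ring.inverse_unit], fun b hb ↦ hb.2⟩
  · intro H₁ H₂ hH₁ hH₂ h₁ h₂
    exact eventuallyEq_of_eventually_mul_comp_mul_eq_one hG (hG0 ▸ ha) hH₁.continuousAt
      hH₂.continuousAt ((h_iff hH₁).1 h₁) ((h_iff hH₂).1 h₂)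

/-- Lemma 2.1 of the paper: existence and uniqueness of the analytic function `H_a` with
`Ψ_a⁽⁻¹⁾(b) = b H_a(b)`, i.e. `Ψ_a (b * H_a b) = b` near `0`, with `H_a(0) = E(a)⁻¹`. -/
theorem stmt_1 (P : NCPS B A) (a : A) (ha : IsUnit (P.E a)) :
    (∃ U ∈ 𝓝 (0 : B), ∃ H : B → B, (∀ b ∈ U, AnalyticAt ℂ H b) ∧
      H 0 = Ring.inverse (P.E a) ∧ ∀ b ∈ U, Psi P a (b * H b) = b) ∧
    ∀ H₁ H₂ : B → B, AnalyticAt ℂ H₁ 0 → AnalyticAt ℂ H₂ 0 →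
      (∀ᶠ b in 𝓝 (0 : B), Psi P a (b * H₁ b) = b) →
      (∀ᶠ b in 𝓝 (0 : B), Psi P a (b * H₂ b) = b) →
      H₁ =ᶠ[𝓝 (0 : B)] H₂ :=
  stmt_1_general (ι := ⟨P.ι.toLinearMap, P.isometry.continuous⟩) P.E_ι_mul P.E_one ha
end
end

section
/- Let B be a unital complex Banach algebra, (A,E) a B-valued Banach noncommutative probability space, and a ∈ A. Then there is a unique B-valued analytic function R_a, defined in a neighborhood of 0 in B, such that 𝒞_a^{⟨−1⟩}(b) = (1 + b R_a(b))^{-1} b = b (1 + R_a(b) b)^{-1} for all b in a neighborhood of 0; moreover R_a(0) = E(a). -/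
open scoped Topology
open Filter

noncomputable section

variable (B A : Type*) [NormedRing B] [NormedAlgebra ℂ B] [CompleteSpace B]
  [NormedRing A] [NormedAlgebra ℂ A] [CompleteSpace A]

variable {B A}

/-- `𝒞_a(b) = E((1 - ba)⁻¹ b)`. -/
def Ca (P : NCPS B A) (a : A) (b : B) : B :=
  P.E (Ring.inverse (1 - P.ι b * a) * P.ι b)

/-- `R` is (a version of) the R-transform of `a`: `R` is analytic near `0` and
`b ↦ (1 + b R(b))⁻¹ b` is a local right inverse of `𝒞_a`, i.e.
`𝒞_a⁽⁻¹⁾(b) = (1 + b R(b))⁻¹ b`. -/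
def IsRTransform (P : NCPS B A) (a : A) (R : B → B) : Prop :=
  AnalyticAt ℂ R 0 ∧
    ∀ᶠ b in 𝓝 (0 : B), Ca P a (Ring.inverse (1 + b * R b) * b) = b

/-!
Near `0` one has `𝒞_a(b) = b + b Φ_a(b) b` with `Φ_a(b) = E(a (1 - ba)⁻¹)` analytic, so the inverse
function theorem gives an analytic local inverse `w` with `b = w + w Φ_a(w) w = w (1 + Φ_a(w) w)`.
Put `R = (1 + Φ_a(w) w)⁻¹ Φ_a(w)`. Then `b R = w Φ_a(w)`, hence `(1 + b R) w = b`.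

For uniqueness, `(1 + b R)⁻¹ b` must equal `w`, which determines `b R(b) b`, hence determines `R(b)`
at invertible `b`. Every neighborhood of `0` contains an open set of invertible elements, so the
identity principle determines `R` near `0`.
-/

section Ring

variable {S : Type*} [Ring S]

theorem isUnit_one_add_mul_comm (a b : S) : IsUnit (1 + a * b) ↔ IsUnit (1 + b * a) := by
  simpa [spectrum.mem_iff, not_iff_not] using
    spectrum.unit_mem_mul_comm (R := ℤ) (a := -a) (b := b) (r := 1)

theorem inverse_one_add_mul_mul (a b : S) :
    Ring.inverse (1 + a * b) * a = a * Ring.inverse (1 + b * a) := by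
  -- If `1 + a * b` is not a unit then neither is `1 + b * a`, and both sides are `0`.
  by_cases hab : IsUnit (1 + a * b)
  · have hba : IsUnit (1 + b * a) := (isUnit_one_add_mul_comm a b).1 hab
    have push_through : (1 + a * b) * a = a * (1 + b * a) := by noncomm_ring
    rw [Ring.inverse_mul_eq_iff_eq_mul _ _ _ hab, ← mul_assoc, push_through,
      Ring.mul_inverse_cancel_right _ _ hba]
  · have hba : ¬IsUnit (1 + b * a) := mt (isUnit_one_add_mul_comm a b).2 hab
    rw [Ring.inverse_non_unit _ hab, Ring.inverse_non_unit _ hba, zero_mul, mul_zero]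

theorem inverse_one_add_mul_mul_eq_of_add_mul_mul_eq {w g b : S} (h : w + w * g * w = b)
    (hu : IsUnit (1 + g * w)) :
    Ring.inverse (1 + b * (Ring.inverse (1 + g * w) * g)) * b = w := by
  have hb : b = w * (1 + g * w) := by rw [← h, mul_add, mul_one, mul_assoc]
  have hbr : b * (Ring.inverse (1 + g * w) * g) = w * g := by
    rw [hb, mul_assoc, Ring.mul_inverse_cancel_left _ _ hu]
  rw [hbr, Ring.inverse_mul_eq_iff_eq_mul _ _ _ ((isUnit_one_add_mul_comm w g).2 hu), ← h, add_mul,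
    one_mul]

theorem mul_mul_eq_of_inverse_one_add_mul_mul_eq {b r r' : S} (hr : IsUnit (1 + b * r))
    (hr' : IsUnit (1 + b * r'))
    (h : Ring.inverse (1 + b * r) * b = Ring.inverse (1 + b * r') * b) :
    b * r * b = b * r' * b := by
  have hr'b : IsUnit (1 + r' * b) := (isUnit_one_add_mul_comm b r').1 hr'
  rw [inverse_one_add_mul_mul b r', Ring.inverse_mul_eq_iff_eq_mul _ _ _ hr, ← mul_assoc,
    Ring.eq_mul_inverse_iff_mul_eq _ _ _ hr'b] at h
  have expanded : b + b * r' * b = b + b * r * b := by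
    simpa only [mul_add, add_mul, mul_one, one_mul, ← mul_assoc] using h
  exact (add_left_cancel expanded).symm

end Ring

section NormedRing

variable {S : Type*} [NormedRing S]

theorem eventually_isUnit_of_continuousAt [HasSummableGeomSeries S] {X : Type*}
    [TopologicalSpace X] {f : X → S} {x : X} (hf : ContinuousAt f x) (hx : IsUnit (f x)) :
    ∀ᶠ y in 𝓝 x, IsUnit (f y) :=
  hf.eventually hx.unit.nhds

theorem eventually_isUnit_one_add_mul [HasSummableGeomSeries S] {R : S → S}
    (hR : ContinuousAt R 0) : ∀ᶠ b in 𝓝 (0 : S), IsUnit (1 + b * R b) :=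
  eventually_isUnit_of_continuousAt (continuousAt_const.add (continuousAt_id.mul hR)) (by simp)

theorem frequently_isUnit_nhds_zero (𝕜 : Type*) [NontriviallyNormedField 𝕜] [NormedAlgebra 𝕜 S] :
    ∃ᶠ b in 𝓝 (0 : S), IsUnit b := by
  have tendsto_algebraMap : Tendsto (algebraMap 𝕜 S) (𝓝[≠] 0) (𝓝 0) :=
    ((continuous_algebraMap 𝕜 S).tendsto' 0 0 (map_zero _)).mono_left nhdsWithin_le_nhds
  have isUnit_algebraMap : ∀ᶠ t in 𝓝[≠] (0 : 𝕜), IsUnit (algebraMap 𝕜 S t) :=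
    eventually_mem_nhdsWithin.mono fun t ht => (IsUnit.mk0 t ht).map (algebraMap 𝕜 S)
  exact tendsto_algebraMap.frequently isUnit_algebraMap.frequently

variable {𝕜 : Type*} [NontriviallyNormedField 𝕜] [NormedAlgebra 𝕜 S]

theorem analyticAt_inverse_comp [HasSummableGeomSeries S] {E : Type*} [NormedAddCommGroup E]
    [NormedSpace 𝕜 E] {f : E → S} {x : E} (hf : AnalyticAt 𝕜 f x) (hx : IsUnit (f x)) :
    AnalyticAt 𝕜 (fun y => Ring.inverse (f y)) x :=
  AnalyticAt.fun_comp (g := Ring.inverse) (analyticAt_inverse hx.unit) hf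

theorem hasFDerivAt_mul_mul_self_zero {G : S → S} (hG : ContinuousAt G 0) :
    HasFDerivAt (fun b => b * G b * b) (0 : S →L[𝕜] S) 0 := by
  have tendsto_mul : Tendsto (fun b => b * G b) (𝓝 0) (𝓝 0) := by
    simpa using (continuousAt_id.fun_mul hG).tendsto
  have isLittleO_mul : (fun b : S => b * G b * b) =o[𝓝 0] fun b => b :=
    Asymptotics.isLittleO_norm_right.1 <| by
      simpa only [one_mul] using ((Asymptotics.isLittleO_one_iff ℝ).2 tendsto_mul).mul_isBigO
        (Asymptotics.isBigO_refl (fun b : S => b) _).norm_right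
  simpa only [hasFDerivAt_iff_isLittleO_nhds_zero, zero_add, mul_zero, sub_zero,
    zero_apply] using isLittleO_mul

end NormedRing

section Analytic

variable {𝕜 E F : Type*} [NontriviallyNormedField 𝕜] [NormedAddCommGroup E] [NormedSpace 𝕜 E]
  [NormedAddCommGroup F] [NormedSpace 𝕜 F]

theorem exists_analyticAt_localInverse [CompleteSpace E] {f : E → F} {f' : E ≃L[𝕜] F} {x : E}
    (hf : AnalyticAt 𝕜 f x) (hf' : HasFDerivAt f (f' : E →L[𝕜] F) x) :
    ∃ g : F → E, AnalyticAt 𝕜 g (f x) ∧ g (f x) = x ∧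
      (∀ᶠ y in 𝓝 (f x), f (g y) = y) ∧ ∀ᶠ y in 𝓝 x, g (f y) = y := by
  have hfs : HasStrictFDerivAt f (f' : E →L[𝕜] F) x := hf'.fderiv ▸ hf.hasStrictFDerivAt
  exact ⟨hfs.localInverse f f' x,
    (hfs.toOpenPartialHomeomorph f).analyticAt_symm' hfs.mem_toOpenPartialHomeomorph_source hf
      hf'.fderiv,
    hfs.localInverse_apply_image, hfs.eventually_right_inverse, hfs.eventually_left_inverse⟩

theorem eventuallyEq_of_frequently_eventuallyEq [LocallyConnectedSpace E] [CompleteSpace F]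
    {f g : E → F} {x : E} (hf : AnalyticAt 𝕜 f x) (hg : AnalyticAt 𝕜 g x)
    (hfg : ∃ᶠ y in 𝓝 x, f =ᶠ[𝓝 y] g) : f =ᶠ[𝓝 x] g := by
  obtain ⟨U, ⟨hU_open, hxU, hU_conn⟩, hU⟩ :=
    (LocallyConnectedSpace.open_connected_basis x).eventually_iff.1
      (hf.eventually_analyticAt.and hg.eventually_analyticAt)
  obtain ⟨y, hy, hyU⟩ := (hfg.and_eventually (hU_open.mem_nhds hxU)).exists
  have hEq : Set.EqOn f g U :=
    AnalyticOnNhd.eqOn_of_preconnected_of_eventuallyEq (fun _ hz => (hU hz).1)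
      (fun _ hz => (hU hz).2) hU_conn.isPreconnected hyU hy
  exact hEq.eventuallyEq_of_mem (hU_open.mem_nhds hxU)

end Analytic

section NormedAlgebra

variable {𝕜 S : Type*} [NontriviallyNormedField 𝕜] [NormedRing S] [NormedAlgebra 𝕜 S]

theorem eventuallyEq_of_eventually_mul_mul_eq [CompleteSpace S] [LocallyConnectedSpace S]
    {f g : S → S} (hf : AnalyticAt 𝕜 f 0) (hg : AnalyticAt 𝕜 g 0)
    (h : ∀ᶠ b in 𝓝 (0 : S), b * f b * b = b * g b * b) : f =ᶠ[𝓝 0] g := by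
  refine eventuallyEq_of_frequently_eventuallyEq hf hg
    (((frequently_isUnit_nhds_zero 𝕜).and_eventually h.eventually_nhds).mono ?_)
  rintro u ⟨hu, hfg⟩
  filter_upwards [hu.unit.nhds, hfg] with b hb hb_eq
  exact hb.mul_left_cancel (hb.mul_right_cancel hb_eq)

theorem eventuallyEq_of_inverse_one_add_mul_mul_eventuallyEq [CompleteSpace S]
    [LocallyConnectedSpace S] {R R' : S → S} (hR : AnalyticAt 𝕜 R 0) (hR' : AnalyticAt 𝕜 R' 0)
    (h : (fun b => Ring.inverse (1 + b * R b) * b) =ᶠ[𝓝 0]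
      fun b => Ring.inverse (1 + b * R' b) * b) : R =ᶠ[𝓝 0] R' := by
  refine eventuallyEq_of_eventually_mul_mul_eq hR hR' ?_
  filter_upwards [h, eventually_isUnit_one_add_mul hR.continuousAt,
    eventually_isUnit_one_add_mul hR'.continuousAt] with b hb hu hu'
  exact mul_mul_eq_of_inverse_one_add_mul_mul_eq hu hu' hb

theorem exists_analyticAt_inverse_one_add_mul_mul_eq [HasSummableGeomSeries S] {G w : S → S}
    (hG : AnalyticAt 𝕜 G 0) (hw : AnalyticAt 𝕜 w 0) (hw0 : w 0 = 0)
    (hGw : ∀ᶠ b in 𝓝 (0 : S), w b + w b * G (w b) * w b = b) :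
    ∃ R : S → S, AnalyticAt 𝕜 R 0 ∧ R 0 = G 0 ∧
      ∀ᶠ b in 𝓝 (0 : S), Ring.inverse (1 + b * R b) * b = w b := by
  have hGw_an : AnalyticAt 𝕜 (fun b => G (w b)) 0 := AnalyticAt.fun_comp (by rwa [hw0]) hw
  have hd : AnalyticAt 𝕜 (fun b => 1 + G (w b) * w b) 0 := analyticAt_const.add (hGw_an.mul hw)
  have hd0 : IsUnit (1 + G (w 0) * w 0) := by simp [hw0]
  refine ⟨fun b => Ring.inverse (1 + G (w b) * w b) * G (w b),
    (analyticAt_inverse_comp hd hd0).mul hGw_an, by simp [hw0], ?_⟩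
  filter_upwards [hGw, eventually_isUnit_of_continuousAt hd.continuousAt hd0] with b hb hu
  exact inverse_one_add_mul_mul_eq_of_add_mul_mul_eq hb hu

end NormedAlgebra

namespace NCPS

variable (P : NCPS B A) (a : A)

/-- The moment generating function `Φ_a(b) = E(a (1 - ba)⁻¹) = ∑ₙ E(a (ba)ⁿ)`, through which
`𝒞_a(b) = b + b Φ_a(b) b`; like `Ca` it is totalized by `Ring.inverse`, so that only its germ at `0`
is meaningful. -/
def momentGenFun (b : B) : B :=
  P.E (a * Ring.inverse (1 - P.ι b * a))

section

omit [CompleteSpace B] [CompleteSpace A]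

@[simp]
theorem momentGenFun_zero : P.momentGenFun a 0 = P.E a := by
  simp [momentGenFun]

theorem analyticAt_one_sub_ι_mul (b : B) : AnalyticAt ℂ (fun b => 1 - P.ι b * a) b := by
  have hι : AnalyticAt ℂ P.ι b :=
    ContinuousLinearMap.analyticAt ⟨P.ι.toLinearMap, P.isometry.continuous⟩ b
  exact analyticAt_const.sub (hι.mul analyticAt_const)

theorem Ca_zero : Ca P a 0 = 0 := by
  simp [Ca]

theorem Ca_eq_add_mul_mul {b : B} (hb : IsUnit (1 - P.ι b * a)) :
    Ca P a b = b + b * P.momentGenFun a b * b := by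
  have resolvent_eq :
      Ring.inverse (1 - P.ι b * a) = 1 + P.ι b * (a * Ring.inverse (1 - P.ι b * a)) := by
    rw [← mul_assoc, ← sub_eq_iff_eq_add, ← one_sub_mul, Ring.mul_inverse_cancel _ hb]
  rw [Ca, resolvent_eq, add_mul, one_mul, map_add, P.E_ι, P.cond_exp, momentGenFun]

end

section

omit [CompleteSpace B]

theorem analyticAt_momentGenFun : AnalyticAt ℂ (P.momentGenFun a) 0 :=
  (P.E.analyticAt _).comp <| analyticAt_const.mul <|
    analyticAt_inverse_comp (P.analyticAt_one_sub_ι_mul a 0) (by simp)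

theorem Ca_eventuallyEq : Ca P a =ᶠ[𝓝 0] fun b => b + b * P.momentGenFun a b * b :=
  (eventually_isUnit_of_continuousAt (P.analyticAt_one_sub_ι_mul a 0).continuousAt
    (by simp)).mono fun _ => P.Ca_eq_add_mul_mul a

theorem analyticAt_Ca : AnalyticAt ℂ (Ca P a) 0 :=
  (analyticAt_id.add ((analyticAt_id.mul (P.analyticAt_momentGenFun a)).mul analyticAt_id)).congr
    (P.Ca_eventuallyEq a).symm

theorem hasFDerivAt_Ca : HasFDerivAt (Ca P a) (ContinuousLinearMap.id ℂ B) 0 := by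
  have h := (hasFDerivAt_id (𝕜 := ℂ) (0 : B)).add
    (hasFDerivAt_mul_mul_self_zero (P.analyticAt_momentGenFun a).continuousAt)
  rw [add_zero] at h
  exact h.congr_of_eventuallyEq (P.Ca_eventuallyEq a)

end

theorem exists_analyticAt_localInverse_Ca :
    ∃ w : B → B, AnalyticAt ℂ w 0 ∧ w 0 = 0 ∧
      (∀ᶠ b in 𝓝 (0 : B), Ca P a (w b) = b) ∧ ∀ᶠ b in 𝓝 (0 : B), w (Ca P a b) = b := by
  simpa only [Ca_zero] using exists_analyticAt_localInverse (f' := .refl ℂ B)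
    (P.analyticAt_Ca a) (P.hasFDerivAt_Ca a)

theorem exists_isRTransform : ∃ R : B → B, IsRTransform P a R ∧ R 0 = P.E a := by
  obtain ⟨w, hw, hw0, hCw, -⟩ := P.exists_analyticAt_localInverse_Ca a
  have tendsto_w : Tendsto w (𝓝 0) (𝓝 0) := by simpa only [hw0] using hw.continuousAt.tendsto
  have hΦw : ∀ᶠ b in 𝓝 (0 : B), w b + w b * P.momentGenFun a (w b) * w b = b := by
    filter_upwards [hCw, tendsto_w.eventually (P.Ca_eventuallyEq a)] with b hCwb hCa
    rw [← hCa, hCwb]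
  obtain ⟨R, hR, hR0, hRw⟩ :=
    exists_analyticAt_inverse_one_add_mul_mul_eq (P.analyticAt_momentGenFun a) hw hw0 hΦw
  refine ⟨R, ⟨hR, ?_⟩, hR0.trans (P.momentGenFun_zero a)⟩
  filter_upwards [hRw, hCw] with b hRwb hCwb
  rw [hRwb, hCwb]

end NCPS

namespace IsRTransform

variable {P : NCPS B A} {a : A} {R R' : B → B}

omit [CompleteSpace A] in
theorem eventuallyEq_localInverse (hR : IsRTransform P a R) {w : B → B}
    (hw : ∀ᶠ b in 𝓝 (0 : B), w (Ca P a b) = b) :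
    w =ᶠ[𝓝 0] fun b => Ring.inverse (1 + b * R b) * b := by
  have hinv : AnalyticAt ℂ (fun b => Ring.inverse (1 + b * R b)) 0 :=
    analyticAt_inverse_comp (analyticAt_const.add (analyticAt_id.mul hR.1)) (by simp)
  have tendsto_zero : Tendsto (fun b => Ring.inverse (1 + b * R b) * b) (𝓝 0) (𝓝 0) := by
    simpa using (hinv.continuousAt.fun_mul continuousAt_id).tendsto
  exact eventuallyEq_of_left_inv_of_right_inv hw hR.2 tendsto_zero

theorem eventuallyEq (hR : IsRTransform P a R) (hR' : IsRTransform P a R') : R =ᶠ[𝓝 0] R' := by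
  obtain ⟨w, -, -, -, hwC⟩ := P.exists_analyticAt_localInverse_Ca a
  exact eventuallyEq_of_inverse_one_add_mul_mul_eventuallyEq hR.1 hR'.1
    ((hR.eventuallyEq_localInverse hwC).symm.trans (hR'.eventuallyEq_localInverse hwC))

end IsRTransform

/-- Proposition 4.1: existence and uniqueness of the R-transform: a unique analytic `R` near `0`
with `𝒞_a⁽⁻¹⁾(b) = (1 + b R(b))⁻¹ b = b (1 + R(b) b)⁻¹`, and `R(0) = E(a)`. -/
theorem stmt_13 (P : NCPS B A) (a : A) :
    ∃ R : B → B, AnalyticAt ℂ R 0 ∧ R 0 = P.E a ∧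
      (∀ᶠ b in 𝓝 (0 : B), Ca P a (Ring.inverse (1 + b * R b) * b) = b) ∧
      (∀ᶠ b in 𝓝 (0 : B),
        Ring.inverse (1 + b * R b) * b = b * Ring.inverse (1 + R b * b)) ∧
      ∀ R' : B → B, AnalyticAt ℂ R' 0 →
        (∀ᶠ b in 𝓝 (0 : B), Ca P a (Ring.inverse (1 + b * R' b) * b) = b) →
        R' =ᶠ[𝓝 (0 : B)] R := by
  obtain ⟨R, hR, hR0⟩ := P.exists_isRTransform a
  exact ⟨R, hR.1, hR0, hR.2, .of_forall fun b => inverse_one_add_mul_mul b (R b),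
    fun R' hR'_an hR'_inv => IsRTransform.eventuallyEq ⟨hR'_an, hR'_inv⟩ hR⟩
end
end
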